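/- (Theorem 3.3) The position vector of M satisfies Δ^{III} x = λ x on U for some real λ ≠ 0 if and only if M is part of a sphere centered at the origin, i.e. there is r > 0 with ‖x(u)‖ = r for all u ∈ U; moreover if Δ^{III} x = λ x with λ ≠ 0 then H/K is constant on U and λ x = −2(H/K) n. -/

import Mathlib

open Matrix

noncomputable section

/-- The parameter domain `ℝ²`. -/
abbrev Param : Type := Fin 2 → ℝ

/-- Vectors in Euclidean 3-space. -/
abbrev Vec3 : Type := Fin 3 → ℝ

/-- Partial derivative of a vector-valued function in the `i`-th coordinate direction. -/
noncomputable def pd (i : Fin 2) (f : Param → Vec3) (u : Param) : Vec3 :=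
  fderiv ℝ f u (Pi.single i 1)

/-- Partial derivative of a scalar function in the `i`-th coordinate direction. -/
noncomputable def pds (i : Fin 2) (f : Param → ℝ) (u : Param) : ℝ :=
  fderiv ℝ f u (Pi.single i 1)

/-- The Euclidean inner product on `ℝ³`. -/
def dot3 (a b : Vec3) : ℝ := ∑ k, a k * b k

/-- The Euclidean norm on `ℝ³`. -/
noncomputable def norm3 (a : Vec3) : ℝ := Real.sqrt (dot3 a a)

/-- The Gauss map `n = (x_{/1} × x_{/2}) / ‖x_{/1} × x_{/2}‖`. -/
noncomputable def gaussMap (x : Param → Vec3) (u : Param) : Vec3 :=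
  (norm3 (crossProduct (pd 0 x u) (pd 1 x u)))⁻¹ • crossProduct (pd 0 x u) (pd 1 x u)

/-- Components `g_{ij}` of the first fundamental form. -/
noncomputable def fformI (x : Param → Vec3) (u : Param) : Matrix (Fin 2) (Fin 2) ℝ :=
  Matrix.of fun i j => dot3 (pd i x u) (pd j x u)

/-- Components `b_{ij} = ⟨∂²x/∂u^i∂u^j, n⟩` of the second fundamental form. -/
noncomputable def fformII (x : Param → Vec3) (u : Param) : Matrix (Fin 2) (Fin 2) ℝ :=
  Matrix.of fun i j => dot3 (pd i (pd j x) u) (gaussMap x u)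

/-- Components `e_{ij} = ⟨n_{/i}, n_{/j}⟩` of the third fundamental form. -/
noncomputable def fformIII (x : Param → Vec3) (u : Param) : Matrix (Fin 2) (Fin 2) ℝ :=
  Matrix.of fun i j => dot3 (pd i (gaussMap x) u) (pd j (gaussMap x) u)

/-- The Gauss curvature `K = det(b_{ij}) / det(g_{ij})`. -/
noncomputable def gaussCurv (x : Param → Vec3) (u : Param) : ℝ :=
  (fformII x u).det / (fformI x u).det

/-- The mean curvature `H = (1/2) g^{ij} b_{ij}`. -/
noncomputable def meanCurv (x : Param → Vec3) (u : Param) : ℝ :=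
  (1 / 2) * ∑ i, ∑ j, (fformI x u)⁻¹ i j * fformII x u i j

/-- First Beltrami operator `∇^J(φ, ψ) = a^{ij} φ_{/i} ψ_{/j}` with respect to the
fundamental form with component matrix `a`, for scalar `φ` and `ℝ³`-valued `ψ`. -/
noncomputable def beltrami1 (a : Param → Matrix (Fin 2) (Fin 2) ℝ)
    (φ : Param → ℝ) (ψ : Param → Vec3) (u : Param) : Vec3 :=
  ∑ i, ∑ j, ((a u)⁻¹ i j * pds i φ u) • pd j ψ u

/-- Second Beltrami operator
`Δ^J f = −(1/√|det a|) ∂_i (√|det a| a^{ij} ∂_j f)` with respect to the fundamental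
form with component matrix `a`, acting componentwise on `ℝ³`-valued functions. -/
noncomputable def beltrami2 (a : Param → Matrix (Fin 2) (Fin 2) ℝ)
    (f : Param → Vec3) (u : Param) : Vec3 :=
  -((Real.sqrt |(a u).det|)⁻¹ •
    ∑ i, ∑ j, pd i (fun v => (Real.sqrt |(a v).det| * (a v)⁻¹ i j) • pd j f v) u)

/-- `x` is an immersion on `U`: the partial derivatives are linearly independent. -/
def Immersed (x : Param → Vec3) (U : Set Param) : Prop :=
  ∀ u ∈ U, LinearIndependent ℝ ![pd 0 x u, pd 1 x u]

/-- `f` is nonconstant on `U`. -/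
def NonconstOn (f : Param → Vec3) (U : Set Param) : Prop :=
  ¬ ∃ v : Vec3, ∀ u ∈ U, f u = v

/-!
Write `n` for the Gauss map, `D = det (n_{/1}, n_{/2}, n)` and `Φ = 2H/K`. Since `dx ∘ dn⁻¹` is a
symmetric endomorphism of the tangent plane with trace `-Φ`, the flux `D e^{ij} x_{/j}` equals
`Φ n × n_{/2} + n × x_{/2}` for `i = 1` and `-(Φ n × n_{/1} + n × x_{/1})` for `i = 2`. In its
divergence the second derivatives cancel, leaving

  `Δ^{III} x = -D⁻¹ (Φ_{/1} n × n_{/2} - Φ_{/2} n × n_{/1}) - Φ n`,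

so that `⟨Δ^{III} x, n⟩ = -Φ` and `⟨Δ^{III} x, n_{/i}⟩ = Φ_{/i}`. If `Δ^{III} x = λ x`, then
differentiating `λ ⟨x, n⟩ = -Φ` gives `λ ⟨x, n_{/i}⟩ = -Φ_{/i}` as well. Hence `Φ` is constant and
`λ x = -Φ n`, which has constant length. Conversely, on a sphere about the origin `x = s n` with `s`
constant, so `Φ = -2s` and `Δ^{III} x = 2 x`.
-/

open Filter
open scoped Topology

section Calculus

variable {E E₁ E₂ F : Type*} [NormedAddCommGroup E] [NormedSpace ℝ E]
  [NormedAddCommGroup E₁] [NormedSpace ℝ E₁] [FiniteDimensional ℝ E₁]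
  [NormedAddCommGroup E₂] [NormedSpace ℝ E₂] [FiniteDimensional ℝ E₂]
  [NormedAddCommGroup F] [NormedSpace ℝ F]

lemma contDiffAt_bilin (B : E₁ →ₗ[ℝ] E₂ →ₗ[ℝ] F) {f : E → E₁} {g : E → E₂} {u : E}
    {k : WithTop ℕ∞} (hf : ContDiffAt ℝ k f u) (hg : ContDiffAt ℝ k g u) :
    ContDiffAt ℝ k (fun v => B (f v) (g v)) u :=
  B.toContinuousBilinearMap.isBoundedBilinearMap.contDiff.contDiffAt.comp u (hf.prodMk hg)

lemma fderiv_bilin_apply (B : E₁ →ₗ[ℝ] E₂ →ₗ[ℝ] F) {f : E → E₁} {g : E → E₂} {u : E}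
    (hf : DifferentiableAt ℝ f u) (hg : DifferentiableAt ℝ g u) (w : E) :
    fderiv ℝ (fun v => B (f v) (g v)) u w =
      B (fderiv ℝ f u w) (g u) + B (f u) (fderiv ℝ g u w) := by
  have h := B.toContinuousBilinearMap.fderiv_of_bilinear hf hg
  simp only [LinearMap.toContinuousBilinearMap_apply] at h
  simp [h, add_comm]

lemma contDiffAt_dotProduct {ι : Type*} [Fintype ι] {f g : E → ι → ℝ} {u : E} {k : WithTop ℕ∞}
    (hf : ContDiffAt ℝ k f u) (hg : ContDiffAt ℝ k g u) :
    ContDiffAt ℝ k (fun v => f v ⬝ᵥ g v) u :=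
  contDiffAt_bilin (dotProductBilin ℝ ℝ) hf hg

lemma contDiffAt_crossProduct {f g : E → Fin 3 → ℝ} {u : E} {k : WithTop ℕ∞}
    (hf : ContDiffAt ℝ k f u) (hg : ContDiffAt ℝ k g u) :
    ContDiffAt ℝ k (fun v => f v ⨯₃ g v) u :=
  contDiffAt_bilin crossProduct hf hg

lemma contDiffAt_det {ι : Type*} [Fintype ι] [DecidableEq ι] {a : E → Matrix ι ι ℝ} {u : E}
    {k : WithTop ℕ∞} (ha : ∀ i j, ContDiffAt ℝ k (fun v => a v i j) u) :
    ContDiffAt ℝ k (fun v => (a v).det) u := by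
  simp only [Matrix.det_apply]
  exact ContDiffAt.sum fun σ _ =>
    (contDiffAt_prod fun i _ => ha (σ i) i).const_smul (Equiv.Perm.sign σ)

lemma contDiffAt_inv_apply {ι : Type*} [Fintype ι] [DecidableEq ι] {a : E → Matrix ι ι ℝ} {u : E}
    {k : WithTop ℕ∞} (ha : ∀ i j, ContDiffAt ℝ k (fun v => a v i j) u) (hdet : (a u).det ≠ 0)
    (i j : ι) : ContDiffAt ℝ k (fun v => (a v)⁻¹ i j) u := by
  simp only [Matrix.inv_def, Ring.inverse_eq_inv', Matrix.smul_apply, Matrix.adjugate_apply]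
  refine ((contDiffAt_det ha).inv hdet).smul (contDiffAt_det fun p q => ?_)
  by_cases hp : p = j
  · simp only [hp, Matrix.updateRow_self]
    exact contDiffAt_const
  · simp only [Matrix.updateRow_ne hp]
    exact ha p q

end Calculus

section PartialDerivatives

variable {f g : Param → Vec3} {u : Param}

lemma contDiffAt_pd {k m : WithTop ℕ∞} (hf : ContDiffAt ℝ m f u) (hk : k + 1 ≤ m) (i : Fin 2) :
    ContDiffAt ℝ k (pd i f) u :=
  (hf.fderiv_right hk).clm_apply contDiffAt_const

lemma pd_congr (h : f =ᶠ[𝓝 u] g) (i : Fin 2) : pd i f u = pd i g u := by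
  rw [pd, pd, h.fderiv_eq]

lemma pds_congr {φ ψ : Param → ℝ} (h : φ =ᶠ[𝓝 u] ψ) (i : Fin 2) : pds i φ u = pds i ψ u := by
  rw [pds, pds, h.fderiv_eq]

lemma pds_eq_zero_of_eventually_const {φ : Param → ℝ} {c : ℝ} (h : ∀ᶠ v in 𝓝 u, φ v = c)
    (i : Fin 2) : pds i φ u = 0 := by
  rw [pds_congr h]
  simp [pds]

lemma pds_const_mul {φ : Param → ℝ} (c : ℝ) (i : Fin 2) :
    pds i (fun v => c * φ v) u = c * pds i φ u :=
  DFunLike.congr_fun (congrFun (fderiv_const_smul_field (f := φ) c) u) _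

lemma pd_const_smul (c : ℝ) (i : Fin 2) : pd i (fun v => c • f v) u = c • pd i f u :=
  DFunLike.congr_fun (congrFun (fderiv_const_smul_field (f := f) c) u) _

lemma pd_neg (i : Fin 2) : pd i (fun v => -f v) u = -pd i f u := by
  simp [pd, fderiv_fun_neg]

lemma pd_add (hf : DifferentiableAt ℝ f u) (hg : DifferentiableAt ℝ g u) (i : Fin 2) :
    pd i (fun v => f v + g v) u = pd i f u + pd i g u := by
  simp [pd, fderiv_fun_add hf hg]

lemma pd_sum {ι : Type*} {s : Finset ι} {f : ι → Param → Vec3}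
    (hf : ∀ j ∈ s, DifferentiableAt ℝ (f j) u) (i : Fin 2) :
    pd i (fun v => ∑ j ∈ s, f j v) u = ∑ j ∈ s, pd i (f j) u := by
  simp [pd, fderiv_fun_sum hf]

lemma pd_smul {φ : Param → ℝ} (hφ : DifferentiableAt ℝ φ u) (hf : DifferentiableAt ℝ f u)
    (i : Fin 2) : pd i (fun v => φ v • f v) u = pds i φ u • f u + φ u • pd i f u := by
  simp [pd, pds, fderiv_fun_smul hφ hf, add_comm]

lemma pds_dotProduct (hf : DifferentiableAt ℝ f u) (hg : DifferentiableAt ℝ g u) (i : Fin 2) :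
    pds i (fun v => f v ⬝ᵥ g v) u = pd i f u ⬝ᵥ g u + f u ⬝ᵥ pd i g u :=
  fderiv_bilin_apply (dotProductBilin ℝ ℝ) hf hg _

lemma pd_cross (hf : DifferentiableAt ℝ f u) (hg : DifferentiableAt ℝ g u) (i : Fin 2) :
    pd i (fun v => f v ⨯₃ g v) u = pd i f u ⨯₃ g u + f u ⨯₃ pd i g u :=
  fderiv_bilin_apply crossProduct hf hg _

lemma pd_pd_comm (hf : ContDiffAt ℝ 2 f u) (i j : Fin 2) :
    pd i (pd j f) u = pd j (pd i f) u := by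
  have pd_pd_eq (i j : Fin 2) :
      pd i (pd j f) u = fderiv ℝ (fderiv ℝ f) u (Pi.single i 1) (Pi.single j 1) := by
    have hf' : DifferentiableAt ℝ (fderiv ℝ f) u :=
      (hf.fderiv_right (m := 1) le_rfl).differentiableAt one_ne_zero
    change fderiv ℝ (fun v => fderiv ℝ f v (Pi.single j 1)) u (Pi.single i 1) = _
    simp [fderiv_clm_apply hf' (differentiableAt_const _)]
  rw [pd_pd_eq, pd_pd_eq]
  exact (hf.isSymmSndFDerivAt (by simp)).eq _ _

lemma pd_cross_pd_sub_pd_cross_pd (hf : DifferentiableAt ℝ f u) (hg : ContDiffAt ℝ 2 g u) :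
    pd 0 (fun v => f v ⨯₃ pd 1 g v) u - pd 1 (fun v => f v ⨯₃ pd 0 g v) u =
      pd 0 f u ⨯₃ pd 1 g u - pd 1 f u ⨯₃ pd 0 g u := by
  have hg' (i : Fin 2) : DifferentiableAt ℝ (pd i g) u :=
    (contDiffAt_pd (k := 1) hg le_rfl i).differentiableAt one_ne_zero
  rw [pd_cross hf (hg' 1), pd_cross hf (hg' 0), pd_pd_comm hg 0 1]
  abel

lemma exists_eqOn_const_of_pds_eq_zero {U : Set Param} {φ : Param → ℝ} (hU : IsOpen U)
    (hconn : IsPreconnected U) (hφ : DifferentiableOn ℝ φ U)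
    (hpds : ∀ u ∈ U, ∀ i, pds i φ u = 0) : ∃ c, ∀ u ∈ U, φ u = c := by
  refine hU.exists_is_const_of_fderiv_eq_zero hconn hφ fun u hu => ?_
  exact ContinuousLinearMap.coe_injective ((Pi.basisFun ℝ (Fin 2)).ext fun i => by
    simpa [pds] using hpds u hu i)

end PartialDerivatives

section VectorAlgebra

variable {R : Type*} [CommRing R] {a b n y : Fin 3 → R}

lemma eq_dotProduct_smul_of_cross_eq_zero (hn : n ⬝ᵥ n = 1) (h : y ⨯₃ n = 0) :
    y = (y ⬝ᵥ n) • n := by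
  have := cross_cross_eq_smul_sub_smul' n y n
  rw [h, hn, map_zero, one_smul] at this
  exact sub_eq_zero.1 this.symm

lemma cross_eq_dotProduct_smul_of_orthogonal (hn : n ⬝ᵥ n = 1) (ha : a ⬝ᵥ n = 0)
    (hb : b ⬝ᵥ n = 0) : a ⨯₃ b = (a ⨯₃ b ⬝ᵥ n) • n :=
  eq_dotProduct_smul_of_cross_eq_zero hn (by simp [cross_cross_eq_smul_sub_smul, ha, hb])

/-- Cayley–Hamilton in disguise: the symmetric endomorphism `L` of `n^⊥` with `L p = a` and
`L q = b` has trace `-Φ`, and `L (n ⨯₃ y) = (tr L) • n ⨯₃ y - n ⨯₃ L y`. -/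
lemma smul_sub_smul_eq_smul_cross_of_symm {p q : Fin 3 → R} {D Φ : R} (hpq : p ⨯₃ q = D • n)
    (htrace : b ⨯₃ p - a ⨯₃ q = Φ • p ⨯₃ q) (hsymm : a ⬝ᵥ q = b ⬝ᵥ p) :
    (q ⬝ᵥ q) • a - (p ⬝ᵥ q) • b = D • (Φ • n ⨯₃ q + n ⨯₃ b) := by
  have h₁ : D • Φ • n ⨯₃ q = (b ⨯₃ p - a ⨯₃ q) ⨯₃ q := by
    rw [htrace, hpq, smul_comm, map_smul, map_smul, LinearMap.smul_apply, LinearMap.smul_apply]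
  have h₂ : D • n ⨯₃ b = p ⨯₃ q ⨯₃ b := by rw [hpq, map_smul, LinearMap.smul_apply]
  rw [smul_add, h₁, h₂, map_sub, LinearMap.sub_apply]
  simp only [cross_cross_eq_smul_sub_smul, hsymm, dotProduct_comm p b, dotProduct_comm q b]
  module

end VectorAlgebra

lemma mul_inv_apply_of_det_eq_sq {K ι : Type*} [Field K] [Fintype ι] [DecidableEq ι]
    {a : Matrix ι ι K} {d : K} (hdet : a.det = d ^ 2) (i j : ι) :
    d * a⁻¹ i j = d⁻¹ * a.adjugate i j := by
  rw [Matrix.inv_def, Ring.inverse_eq_inv', hdet, Matrix.smul_apply, smul_eq_mul, ← mul_assoc]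
  congr 1
  rcases eq_or_ne d 0 with rfl | hd
  · simp
  · field_simp

lemma eventually_abs_eq_sign_mul {X : Type*} [TopologicalSpace X] {D : X → ℝ} {u : X}
    (hD : ContinuousAt D u) (hu : D u ≠ 0) :
    ∀ᶠ v in 𝓝 u, |D v| = SignType.sign (D u) * D v := by
  have hsign : ∀ᶠ v in 𝓝 u, SignType.sign (D v) = SignType.sign (D u) :=
    hD.eventually <| (continuousAt_sign_of_ne_zero hu).eventually <|
      mem_nhds_discrete.2 (Set.mem_singleton _)
  filter_upwards [hsign] with v hv
  rw [← hv, sign_mul_self]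

lemma beltrami2_eq_of_det_eq_sq {a : Param → Matrix (Fin 2) (Fin 2) ℝ} {D : Param → ℝ}
    {u : Param} (f : Param → Vec3) (hD : ContinuousAt D u) (hu : D u ≠ 0)
    (hdet : ∀ᶠ v in 𝓝 u, (a v).det = D v ^ 2) :
    beltrami2 a f u =
      -((D u)⁻¹ • ∑ i, ∑ j, pd i (fun v => (D v * (a v)⁻¹ i j) • pd j f v) u) := by
  obtain ⟨s, hs⟩ : ∃ s : ℝ, s = SignType.sign (D u) := ⟨_, rfl⟩
  have hs0 : s ≠ 0 := by
    rcases hu.lt_or_gt with hneg | hpos <;> simp [*]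
  have hsqrt : ∀ᶠ v in 𝓝 u, √|(a v).det| = s * D v := by
    filter_upwards [hdet, eventually_abs_eq_sign_mul hD hu] with v hv hsv
    rw [hv, abs_sq, Real.sqrt_sq_eq_abs, hsv, hs]
  have hpd (i j : Fin 2) : pd i (fun v => (√|(a v).det| * (a v)⁻¹ i j) • pd j f v) u =
      s • pd i (fun v => (D v * (a v)⁻¹ i j) • pd j f v) u := by
    rw [← pd_const_smul]
    refine pd_congr (hsqrt.mono fun v hv => ?_) i
    simp only [hv, smul_smul, mul_assoc]
  simp only [beltrami2, hpd, ← Finset.smul_sum, hsqrt.self_of_nhds, smul_smul, mul_inv]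
  congr 2
  field_simp

/-- A unit normal field `n` along `x` on an open set `U`. Neither `x` nor `n` is required to be an
immersion, so `x` may be a front with singularities. -/
structure IsUnitNormal (x n : Param → Vec3) (U : Set Param) : Prop where
  isOpen : IsOpen U
  contDiffAt : ∀ u ∈ U, ContDiffAt ℝ 2 x u
  contDiffAt_normal : ∀ u ∈ U, ContDiffAt ℝ 2 n u
  dotProduct_self : ∀ u ∈ U, n u ⬝ᵥ n u = 1
  pd_dotProduct : ∀ u ∈ U, ∀ i, pd i x u ⬝ᵥ n u = 0

/-- The signed area density `det (n_{/1}, n_{/2}, n)` of a map `n` into the unit sphere: a signed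
square root of the determinant of its first fundamental form. -/
def sphericalJacobian (n : Param → Vec3) (u : Param) : ℝ :=
  pd 0 n u ⨯₃ pd 1 n u ⬝ᵥ n u

/-- The sum `R₁ + R₂ = 2H/K` of the principal radii of curvature of `x` with respect to the unit
normal field `n`, i.e. minus the trace of `dx ∘ dn⁻¹`. It is zero, by convention of division,
where `n` fails to be an immersion. -/
def sumPrincipalRadii (x n : Param → Vec3) (u : Param) : ℝ :=
  (pd 1 x u ⨯₃ pd 0 n u - pd 0 x u ⨯₃ pd 1 n u) ⬝ᵥ n u / sphericalJacobian n u

lemma fformI_apply (f : Param → Vec3) (u : Param) (i j : Fin 2) :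
    fformI f u i j = pd i f u ⬝ᵥ pd j f u :=
  rfl

lemma det_fformI (f : Param → Vec3) (u : Param) :
    (fformI f u).det = pd 0 f u ⨯₃ pd 1 f u ⬝ᵥ pd 0 f u ⨯₃ pd 1 f u := by
  simp only [cross_dot_cross, Matrix.det_fin_two, fformI_apply]

namespace IsUnitNormal

variable {x n : Param → Vec3} {U : Set Param} {u : Param}

lemma differentiableAt (h : IsUnitNormal x n U) (hu : u ∈ U) : DifferentiableAt ℝ x u :=
  (h.contDiffAt u hu).differentiableAt two_ne_zero

lemma differentiableAt_normal (h : IsUnitNormal x n U) (hu : u ∈ U) : DifferentiableAt ℝ n u :=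
  (h.contDiffAt_normal u hu).differentiableAt two_ne_zero

lemma contDiffAt_pd (h : IsUnitNormal x n U) (hu : u ∈ U) (i : Fin 2) :
    ContDiffAt ℝ 1 (pd i x) u :=
  _root_.contDiffAt_pd (h.contDiffAt u hu) le_rfl i

lemma contDiffAt_pd_normal (h : IsUnitNormal x n U) (hu : u ∈ U) (i : Fin 2) :
    ContDiffAt ℝ 1 (pd i n) u :=
  _root_.contDiffAt_pd (h.contDiffAt_normal u hu) le_rfl i

lemma contDiffAt_sphericalJacobian (h : IsUnitNormal x n U) (hu : u ∈ U) :
    ContDiffAt ℝ 1 (sphericalJacobian n) u :=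
  contDiffAt_dotProduct
    (contDiffAt_crossProduct (h.contDiffAt_pd_normal hu 0) (h.contDiffAt_pd_normal hu 1))
    ((h.contDiffAt_normal u hu).of_le one_le_two)

lemma differentiableAt_sumPrincipalRadii (h : IsUnitNormal x n U) (hu : u ∈ U)
    (hD : sphericalJacobian n u ≠ 0) : DifferentiableAt ℝ (sumPrincipalRadii x n) u := by
  have hcross (i j : Fin 2) := contDiffAt_crossProduct (h.contDiffAt_pd hu i)
    (h.contDiffAt_pd_normal hu j)
  have hnum := contDiffAt_dotProduct ((hcross 1 0).sub (hcross 0 1))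
    ((h.contDiffAt_normal u hu).of_le one_le_two)
  exact (hnum.div (h.contDiffAt_sphericalJacobian hu) hD).differentiableAt one_ne_zero

lemma pd_normal_dotProduct (h : IsUnitNormal x n U) (hu : u ∈ U) (i : Fin 2) :
    pd i n u ⬝ᵥ n u = 0 := by
  have hconst := pds_eq_zero_of_eventually_const
    (eventually_of_mem (h.isOpen.mem_nhds hu) h.dotProduct_self) i
  rw [pds_dotProduct (h.differentiableAt_normal hu) (h.differentiableAt_normal hu),
    dotProduct_comm (n u)] at hconst
  linarith

lemma pd_pd_dotProduct (h : IsUnitNormal x n U) (hu : u ∈ U) (i j : Fin 2) :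
    pd i (pd j x) u ⬝ᵥ n u = -(pd j x u ⬝ᵥ pd i n u) := by
  have hconst := pds_eq_zero_of_eventually_const
    (eventually_of_mem (h.isOpen.mem_nhds hu) fun v hv => h.pd_dotProduct v hv j) i
  rw [pds_dotProduct ((h.contDiffAt_pd hu j).differentiableAt one_ne_zero)
    (h.differentiableAt_normal hu)] at hconst
  exact eq_neg_of_add_eq_zero_left hconst

lemma pd_dotProduct_pd_normal_comm (h : IsUnitNormal x n U) (hu : u ∈ U) (i j : Fin 2) :
    pd i x u ⬝ᵥ pd j n u = pd j x u ⬝ᵥ pd i n u := by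
  rw [← neg_inj, ← h.pd_pd_dotProduct hu, ← h.pd_pd_dotProduct hu,
    pd_pd_comm (h.contDiffAt u hu)]

lemma pds_dotProduct_normal (h : IsUnitNormal x n U) (hu : u ∈ U) (i : Fin 2) :
    pds i (fun v => x v ⬝ᵥ n v) u = x u ⬝ᵥ pd i n u := by
  rw [pds_dotProduct (h.differentiableAt hu) (h.differentiableAt_normal hu),
    h.pd_dotProduct u hu, zero_add]

lemma pd_normal_cross_pd_normal (h : IsUnitNormal x n U) (hu : u ∈ U) :
    pd 0 n u ⨯₃ pd 1 n u = sphericalJacobian n u • n u :=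
  cross_eq_dotProduct_smul_of_orthogonal (h.dotProduct_self u hu) (h.pd_normal_dotProduct hu 0)
    (h.pd_normal_dotProduct hu 1)

lemma det_fformI_normal (h : IsUnitNormal x n U) (hu : u ∈ U) :
    (fformI n u).det = sphericalJacobian n u ^ 2 := by
  rw [det_fformI, h.pd_normal_cross_pd_normal hu, smul_dotProduct, dotProduct_smul,
    h.dotProduct_self u hu, smul_eq_mul, smul_eq_mul, mul_one, sq]

lemma pd_cross_pd_normal_sub (h : IsUnitNormal x n U) (hu : u ∈ U)
    (hD : sphericalJacobian n u ≠ 0) :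
    pd 1 x u ⨯₃ pd 0 n u - pd 0 x u ⨯₃ pd 1 n u =
      sumPrincipalRadii x n u • pd 0 n u ⨯₃ pd 1 n u := by
  have hparallel (i j : Fin 2) :
      pd i x u ⨯₃ pd j n u = (pd i x u ⨯₃ pd j n u ⬝ᵥ n u) • n u :=
    cross_eq_dotProduct_smul_of_orthogonal (h.dotProduct_self u hu) (h.pd_dotProduct u hu i)
      (h.pd_normal_dotProduct hu j)
  rw [h.pd_normal_cross_pd_normal hu, smul_smul, sumPrincipalRadii, div_mul_cancel₀ _ hD,
    sub_dotProduct, sub_smul, ← hparallel, ← hparallel]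

lemma sum_inv_fformI_smul_pd_zero (h : IsUnitNormal x n U) (hu : u ∈ U)
    (hD : sphericalJacobian n u ≠ 0) :
    ∑ j, (sphericalJacobian n u * (fformI n u)⁻¹ 0 j) • pd j x u =
      sumPrincipalRadii x n u • n u ⨯₃ pd 1 n u + n u ⨯₃ pd 1 x u := by
  have key := smul_sub_smul_eq_smul_cross_of_symm (h.pd_normal_cross_pd_normal hu)
    (h.pd_cross_pd_normal_sub hu hD) (h.pd_dotProduct_pd_normal_comm hu 0 1)
  rw [← inv_smul_eq_iff₀ hD] at key
  rw [← key, Fin.sum_univ_two]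
  simp only [mul_inv_apply_of_det_eq_sq (h.det_fformI_normal hu), adjugate_fin_two, of_apply,
    cons_val', cons_val_zero, cons_val_one, cons_val_fin_one, fformI_apply]
  module

lemma sum_inv_fformI_smul_pd_one (h : IsUnitNormal x n U) (hu : u ∈ U)
    (hD : sphericalJacobian n u ≠ 0) :
    ∑ j, (sphericalJacobian n u * (fformI n u)⁻¹ 1 j) • pd j x u =
      -(sumPrincipalRadii x n u • n u ⨯₃ pd 0 n u + n u ⨯₃ pd 0 x u) := by
  have hpq : pd 1 n u ⨯₃ pd 0 n u = (-sphericalJacobian n u) • n u := by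
    rw [← cross_anticomm, h.pd_normal_cross_pd_normal hu, neg_smul]
  have htrace : pd 0 x u ⨯₃ pd 1 n u - pd 1 x u ⨯₃ pd 0 n u =
      sumPrincipalRadii x n u • pd 1 n u ⨯₃ pd 0 n u := by
    rw [← neg_sub, h.pd_cross_pd_normal_sub hu hD, ← smul_neg, cross_anticomm]
  have key := smul_sub_smul_eq_smul_cross_of_symm hpq htrace
    (h.pd_dotProduct_pd_normal_comm hu 1 0)
  rw [neg_smul, ← smul_neg, ← inv_smul_eq_iff₀ hD] at key
  rw [← key, Fin.sum_univ_two]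
  simp only [mul_inv_apply_of_det_eq_sq (h.det_fformI_normal hu), adjugate_fin_two, of_apply,
    cons_val', cons_val_zero, cons_val_one, cons_val_fin_one, fformI_apply]
  module

/-- The second derivatives cancel, and `n_{/1} ⨯₃ x_{/2} - n_{/2} ⨯₃ x_{/1}` absorbs one of the two
copies of `Φ • n_{/1} ⨯₃ n_{/2}`. -/
lemma pd_zero_sub_pd_one (h : IsUnitNormal x n U) (hu : u ∈ U)
    (hD : sphericalJacobian n u ≠ 0) :
    pd 0 (fun v => sumPrincipalRadii x n v • n v ⨯₃ pd 1 n v + n v ⨯₃ pd 1 x v) u -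
        pd 1 (fun v => sumPrincipalRadii x n v • n v ⨯₃ pd 0 n v + n v ⨯₃ pd 0 x v) u =
      pds 0 (sumPrincipalRadii x n) u • n u ⨯₃ pd 1 n u -
        pds 1 (sumPrincipalRadii x n) u • n u ⨯₃ pd 0 n u +
        sumPrincipalRadii x n u • pd 0 n u ⨯₃ pd 1 n u := by
  have hn := (h.contDiffAt_normal u hu).of_le one_le_two
  have hΦ := h.differentiableAt_sumPrincipalRadii hu hD
  have hN (i : Fin 2) : DifferentiableAt ℝ (fun v => n v ⨯₃ pd i n v) u :=
    (contDiffAt_crossProduct hn (h.contDiffAt_pd_normal hu i)).differentiableAt one_ne_zero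
  have hX (i : Fin 2) : DifferentiableAt ℝ (fun v => n v ⨯₃ pd i x v) u :=
    (contDiffAt_crossProduct hn (h.contDiffAt_pd hu i)).differentiableAt one_ne_zero
  have hcurlN := pd_cross_pd_sub_pd_cross_pd (h.differentiableAt_normal hu)
    (h.contDiffAt_normal u hu)
  have hcurlX := pd_cross_pd_sub_pd_cross_pd (h.differentiableAt_normal hu) (h.contDiffAt u hu)
  have hmixed : pd 0 n u ⨯₃ pd 1 x u - pd 1 n u ⨯₃ pd 0 x u =
      -(sumPrincipalRadii x n u • pd 0 n u ⨯₃ pd 1 n u) := by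
    rw [← h.pd_cross_pd_normal_sub hu hD, ← cross_anticomm (pd 1 x u), ← cross_anticomm (pd 0 x u)]
    abel
  rw [hmixed, sub_eq_iff_eq_add] at hcurlX
  rw [← cross_anticomm (pd 0 n u), sub_eq_iff_eq_add] at hcurlN
  rw [pd_add (hΦ.fun_smul (hN 1)) (hX 1), pd_add (hΦ.fun_smul (hN 0)) (hX 0), pd_smul hΦ (hN 1),
    pd_smul hΦ (hN 0), hcurlN, hcurlX]
  module

lemma differentiableAt_inv_fformI_smul_pd (h : IsUnitNormal x n U) (hu : u ∈ U)
    (hD : sphericalJacobian n u ≠ 0) (i j : Fin 2) :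
    DifferentiableAt ℝ (fun v => (sphericalJacobian n v * (fformI n v)⁻¹ i j) • pd j x v) u := by
  have hdet : (fformI n u).det ≠ 0 := by
    rw [h.det_fformI_normal hu]
    exact pow_ne_zero 2 hD
  have hinv := contDiffAt_inv_apply (fun i j => contDiffAt_dotProduct
    (h.contDiffAt_pd_normal hu i) (h.contDiffAt_pd_normal hu j)) hdet i j
  exact (((h.contDiffAt_sphericalJacobian hu).mul hinv).smul
    (h.contDiffAt_pd hu j)).differentiableAt one_ne_zero

theorem beltrami2_eq (h : IsUnitNormal x n U) (hD : ∀ v ∈ U, sphericalJacobian n v ≠ 0)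
    (hu : u ∈ U) :
    beltrami2 (fformI n) x u =
      -((sphericalJacobian n u)⁻¹ • (pds 0 (sumPrincipalRadii x n) u • n u ⨯₃ pd 1 n u -
        pds 1 (sumPrincipalRadii x n) u • n u ⨯₃ pd 0 n u)) - sumPrincipalRadii x n u • n u := by
  have hnhds := h.isOpen.mem_nhds hu
  have hflux (i : Fin 2) : ∑ j, pd i (fun v =>
      (sphericalJacobian n v * (fformI n v)⁻¹ i j) • pd j x v) u =
      pd i (fun v => ∑ j, (sphericalJacobian n v * (fformI n v)⁻¹ i j) • pd j x v) u :=
    (pd_sum (fun j _ => h.differentiableAt_inv_fformI_smul_pd hu (hD u hu) i j) i).symm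
  have hflux₀ := pd_congr (eventually_of_mem hnhds fun v hv =>
    h.sum_inv_fformI_smul_pd_zero hv (hD v hv)) 0
  have hflux₁ := pd_congr (eventually_of_mem hnhds fun v hv =>
    h.sum_inv_fformI_smul_pd_one hv (hD v hv)) 1
  rw [beltrami2_eq_of_det_eq_sq x (h.contDiffAt_sphericalJacobian hu).continuousAt (hD u hu)
      (eventually_of_mem hnhds fun v hv => h.det_fformI_normal hv),
    Fin.sum_univ_two, hflux, hflux, hflux₀, hflux₁, pd_neg, ← sub_eq_add_neg,
    h.pd_zero_sub_pd_one hu (hD u hu), h.pd_normal_cross_pd_normal hu, smul_add,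
    smul_comm _ (sumPrincipalRadii x n u), inv_smul_smul₀ (hD u hu), neg_add']

lemma beltrami2_dotProduct_normal (h : IsUnitNormal x n U)
    (hD : ∀ v ∈ U, sphericalJacobian n v ≠ 0) (hu : u ∈ U) :
    beltrami2 (fformI n) x u ⬝ᵥ n u = -sumPrincipalRadii x n u := by
  have horth (y : Vec3) : n u ⨯₃ y ⬝ᵥ n u = 0 := by rw [dotProduct_comm, dot_self_cross]
  simp [h.beltrami2_eq hD hu, horth, h.dotProduct_self u hu]

lemma beltrami2_dotProduct_pd_normal (h : IsUnitNormal x n U)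
    (hD : ∀ v ∈ U, sphericalJacobian n v ≠ 0) (hu : u ∈ U) (i : Fin 2) :
    beltrami2 (fformI n) x u ⬝ᵥ pd i n u = pds i (sumPrincipalRadii x n) u := by
  have h₀ : n u ⨯₃ pd 0 n u ⬝ᵥ pd 1 n u = sphericalJacobian n u := by
    rw [sphericalJacobian, dotProduct_comm, triple_product_permutation, dotProduct_comm]
  have h₁ : n u ⨯₃ pd 1 n u ⬝ᵥ pd 0 n u = -sphericalJacobian n u := by
    rw [dotProduct_comm, triple_product_permutation, ← cross_anticomm, dotProduct_neg,
      dotProduct_comm, sphericalJacobian]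
  have hself (i : Fin 2) : n u ⨯₃ pd i n u ⬝ᵥ pd i n u = 0 := by
    rw [dotProduct_comm, dot_cross_self]
  have hnormal : n u ⬝ᵥ pd i n u = 0 := by rw [dotProduct_comm, h.pd_normal_dotProduct hu]
  have hDu := hD u hu
  rw [h.beltrami2_eq hD hu, sub_dotProduct, neg_dotProduct, smul_dotProduct, sub_dotProduct,
    smul_dotProduct, smul_dotProduct, smul_dotProduct, hnormal]
  fin_cases i <;>
    simp only [Fin.zero_eta, Fin.mk_one, h₀, h₁, hself, smul_eq_mul] <;>
    field_simp <;>
    ring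

lemma beltrami2_eq_neg_smul_of_pds_eq_zero (h : IsUnitNormal x n U)
    (hD : ∀ v ∈ U, sphericalJacobian n v ≠ 0) (hu : u ∈ U)
    (hpds : ∀ i, pds i (sumPrincipalRadii x n) u = 0) :
    beltrami2 (fformI n) x u = -sumPrincipalRadii x n u • n u := by
  simp [h.beltrami2_eq hD hu, hpds]

/-- Differentiating `⟨Δ x, n⟩ = -Φ` gives `⟨Δ x, n_{/i}⟩ = -Φ_{/i}` when `Δ x` is proportional to
`x`, whereas `⟨Δ x, n_{/i}⟩ = Φ_{/i}` in general. -/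
lemma pds_sumPrincipalRadii_eq_zero_of_beltrami2_eq_smul (h : IsUnitNormal x n U)
    (hD : ∀ v ∈ U, sphericalJacobian n v ≠ 0) {c : ℝ}
    (hc : ∀ v ∈ U, beltrami2 (fformI n) x v = c • x v) (hu : u ∈ U) (i : Fin 2) :
    pds i (sumPrincipalRadii x n) u = 0 := by
  have hΦ : ∀ v ∈ U, sumPrincipalRadii x n v = -c * x v ⬝ᵥ n v := fun v hv => by
    have := h.beltrami2_dotProduct_normal hD hv
    rw [hc v hv, smul_dotProduct, smul_eq_mul] at this
    linarith
  have htangential := h.beltrami2_dotProduct_pd_normal hD hu i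
  rw [hc u hu, smul_dotProduct, smul_eq_mul] at htangential
  have hdiff := pds_congr (eventually_of_mem (h.isOpen.mem_nhds hu) hΦ) i
  rw [pds_const_mul, h.pds_dotProduct_normal hu] at hdiff
  linarith

theorem smul_eq_of_beltrami2_eq_smul (h : IsUnitNormal x n U)
    (hD : ∀ v ∈ U, sphericalJacobian n v ≠ 0) {c : ℝ}
    (hc : ∀ v ∈ U, beltrami2 (fformI n) x v = c • x v) (hu : u ∈ U) :
    c • x u = -sumPrincipalRadii x n u • n u := by
  rw [← hc u hu, h.beltrami2_eq_neg_smul_of_pds_eq_zero hD hu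
    (h.pds_sumPrincipalRadii_eq_zero_of_beltrami2_eq_smul hD hc hu)]

theorem exists_sumPrincipalRadii_eq_const (h : IsUnitNormal x n U) (hconn : IsPreconnected U)
    (hD : ∀ v ∈ U, sphericalJacobian n v ≠ 0) {c : ℝ}
    (hc : ∀ v ∈ U, beltrami2 (fformI n) x v = c • x v) :
    ∃ Φ, ∀ u ∈ U, sumPrincipalRadii x n u = Φ :=
  exists_eqOn_const_of_pds_eq_zero h.isOpen hconn
    (fun u hu => (h.differentiableAt_sumPrincipalRadii hu (hD u hu)).differentiableWithinAt)
    (fun _ hu => h.pds_sumPrincipalRadii_eq_zero_of_beltrami2_eq_smul hD hc hu)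

lemma pds_dotProduct_normal_eq_zero (h : IsUnitNormal x n U) (hu : u ∈ U)
    (hx : x u = (x u ⬝ᵥ n u) • n u) (i : Fin 2) : pds i (fun v => x v ⬝ᵥ n v) u = 0 := by
  rw [h.pds_dotProduct_normal hu, hx, smul_dotProduct, dotProduct_comm (n u) (pd i n u),
    h.pd_normal_dotProduct hu, smul_zero]

lemma sumPrincipalRadii_eq_of_eq_smul_normal (h : IsUnitNormal x n U)
    (hx : ∀ v ∈ U, x v = (x v ⬝ᵥ n v) • n v) (hu : u ∈ U) (hD : sphericalJacobian n u ≠ 0) :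
    sumPrincipalRadii x n u = -2 * x u ⬝ᵥ n u := by
  have hsupport : DifferentiableAt ℝ (fun v => x v ⬝ᵥ n v) u :=
    (contDiffAt_dotProduct (h.contDiffAt u hu)
      (h.contDiffAt_normal u hu)).differentiableAt two_ne_zero
  have hpd (i : Fin 2) : pd i x u = (x u ⬝ᵥ n u) • pd i n u := by
    rw [pd_congr (eventually_of_mem (h.isOpen.mem_nhds hu) hx),
      pd_smul hsupport (h.differentiableAt_normal hu),
      h.pds_dotProduct_normal_eq_zero hu (hx u hu), zero_smul, zero_add]
  rw [sumPrincipalRadii, div_eq_iff hD, hpd, hpd, map_smul, map_smul, LinearMap.smul_apply,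
    LinearMap.smul_apply, ← cross_anticomm (pd 0 n u), sphericalJacobian]
  simp only [sub_dotProduct, smul_dotProduct, neg_dotProduct, smul_eq_mul]
  ring

theorem beltrami2_eq_two_smul_of_eq_smul_normal (h : IsUnitNormal x n U)
    (hD : ∀ v ∈ U, sphericalJacobian n v ≠ 0) (hx : ∀ v ∈ U, x v = (x v ⬝ᵥ n v) • n v)
    (hu : u ∈ U) : beltrami2 (fformI n) x u = (2 : ℝ) • x u := by
  have hΦ : ∀ v ∈ U, sumPrincipalRadii x n v = -2 * x v ⬝ᵥ n v := fun v hv =>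
    h.sumPrincipalRadii_eq_of_eq_smul_normal hx hv (hD v hv)
  have hpds (i : Fin 2) : pds i (sumPrincipalRadii x n) u = 0 := by
    rw [pds_congr (eventually_of_mem (h.isOpen.mem_nhds hu) hΦ), pds_const_mul,
      h.pds_dotProduct_normal_eq_zero hu (hx u hu), mul_zero]
  rw [h.beltrami2_eq_neg_smul_of_pds_eq_zero hD hu hpds, hΦ u hu, neg_mul, neg_neg, mul_smul,
    ← hx u hu]

end IsUnitNormal

lemma dot3_eq_dotProduct (a b : Vec3) : dot3 a b = a ⬝ᵥ b :=
  rfl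

lemma norm3_sq (a : Vec3) : norm3 a ^ 2 = a ⬝ᵥ a :=
  Real.sq_sqrt (Finset.sum_nonneg fun _ _ => mul_self_nonneg _)

lemma norm3_ne_zero {a : Vec3} (ha : a ≠ 0) : norm3 a ≠ 0 := fun h => ha <| by
  rw [← dotProduct_self_eq_zero, ← norm3_sq, h, sq, zero_mul]

lemma norm3_smul_of_dotProduct_self_eq_one {n : Vec3} (hn : n ⬝ᵥ n = 1) (c : ℝ) :
    norm3 (c • n) = |c| := by
  rw [norm3, dot3_eq_dotProduct, smul_dotProduct, dotProduct_smul, hn, smul_eq_mul, smul_eq_mul,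
    mul_one, Real.sqrt_mul_self_eq_abs]

section GaussMap

variable {x : Param → Vec3} {U : Set Param} {u : Param}

lemma fformII_apply (x : Param → Vec3) (u : Param) (i j : Fin 2) :
    fformII x u i j = pd i (pd j x) u ⬝ᵥ gaussMap x u :=
  rfl

lemma fformIII_eq_fformI_gaussMap (x : Param → Vec3) : fformIII x = fformI (gaussMap x) :=
  rfl

lemma Immersed.cross_ne_zero (himm : Immersed x U) (hu : u ∈ U) : pd 0 x u ⨯₃ pd 1 x u ≠ 0 :=
  crossProduct_ne_zero_iff_linearIndependent.2 (himm u hu)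

lemma Immersed.gaussMap_dotProduct_self (himm : Immersed x U) (hu : u ∈ U) :
    gaussMap x u ⬝ᵥ gaussMap x u = 1 := by
  have hnorm := norm3_ne_zero (himm.cross_ne_zero hu)
  rw [gaussMap, smul_dotProduct, dotProduct_smul, ← norm3_sq, smul_eq_mul, smul_eq_mul]
  field_simp

lemma pd_dotProduct_gaussMap (x : Param → Vec3) (u : Param) (i : Fin 2) :
    pd i x u ⬝ᵥ gaussMap x u = 0 := by
  rw [gaussMap, dotProduct_smul]
  fin_cases i
  · exact smul_eq_zero_of_right _ (dot_self_cross _ _)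
  · exact smul_eq_zero_of_right _ (dot_cross_self _ _)

lemma contDiffAt_gaussMap {k m : WithTop ℕ∞} (hx : ContDiffAt ℝ m x u) (hk : k + 1 ≤ m)
    (hcross : pd 0 x u ⨯₃ pd 1 x u ≠ 0) : ContDiffAt ℝ k (gaussMap x) u := by
  have hc := contDiffAt_crossProduct (contDiffAt_pd hx hk 0) (contDiffAt_pd hx hk 1)
  have hnorm := (contDiffAt_dotProduct hc hc).sqrt (dotProduct_self_eq_zero.not.2 hcross)
  exact (hnorm.inv (norm3_ne_zero hcross)).smul hc

lemma Immersed.isUnitNormal_gaussMap (himm : Immersed x U) (hU : IsOpen U)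
    (hx : ContDiffOn ℝ 3 x U) : IsUnitNormal x (gaussMap x) U where
  isOpen := hU
  contDiffAt u hu := (hx.contDiffAt (hU.mem_nhds hu)).of_le (by norm_num)
  contDiffAt_normal u hu :=
    contDiffAt_gaussMap (hx.contDiffAt (hU.mem_nhds hu)) (by norm_num) (himm.cross_ne_zero hu)
  dotProduct_self _ hu := himm.gaussMap_dotProduct_self hu
  pd_dotProduct u _ := pd_dotProduct_gaussMap x u

lemma IsUnitNormal.fformII_eq (h : IsUnitNormal x (gaussMap x) U) (hu : u ∈ U) (i j : Fin 2) :
    fformII x u i j = -(pd j x u ⬝ᵥ pd i (gaussMap x) u) := by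
  rw [fformII_apply, h.pd_pd_dotProduct hu]

lemma IsUnitNormal.det_fformII (h : IsUnitNormal x (gaussMap x) U) (hu : u ∈ U) :
    (fformII x u).det =
      pd 0 x u ⨯₃ pd 1 x u ⬝ᵥ pd 0 (gaussMap x) u ⨯₃ pd 1 (gaussMap x) u := by
  simp only [Matrix.det_fin_two, h.fformII_eq hu, cross_dot_cross]
  ring

lemma IsUnitNormal.sphericalJacobian_gaussMap_ne_zero (h : IsUnitNormal x (gaussMap x) U)
    (hu : u ∈ U) (hpar : (fformII x u).det ≠ 0) : sphericalJacobian (gaussMap x) u ≠ 0 :=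
  fun hD => hpar <| by
    rw [h.det_fformII hu, h.pd_normal_cross_pd_normal hu, hD, zero_smul, dotProduct_zero]

lemma meanCurv_eq (x : Param → Vec3) (u : Param) :
    meanCurv x u = (fformI x u 1 1 * fformII x u 0 0 - fformI x u 0 1 * fformII x u 0 1
      - fformI x u 1 0 * fformII x u 1 0 + fformI x u 0 0 * fformII x u 1 1) /
      (2 * (fformI x u).det) := by
  simp only [meanCurv, Fin.sum_univ_two, inv_def, Ring.inverse_eq_inv', adjugate_fin_two,
    Matrix.smul_apply, smul_eq_mul, of_apply, cons_val', cons_val_zero, cons_val_one,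
    cons_val_fin_one]
  ring

lemma IsUnitNormal.two_mul_meanCurv_div_gaussCurv (h : IsUnitNormal x (gaussMap x) U)
    (hu : u ∈ U) (himm : Immersed x U) (hpar : (fformII x u).det ≠ 0) :
    2 * (meanCurv x u / gaussCurv x u) = sumPrincipalRadii x (gaussMap x) u := by
  have hI : (fformI x u).det ≠ 0 := by
    rw [det_fformI]
    exact dotProduct_self_eq_zero.not.2 (himm.cross_ne_zero hu)
  have htrace : fformI x u 1 1 * fformII x u 0 0 - fformI x u 0 1 * fformII x u 0 1
      - fformI x u 1 0 * fformII x u 1 0 + fformI x u 0 0 * fformII x u 1 1 =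
      sumPrincipalRadii x (gaussMap x) u * (fformII x u).det := by
    rw [h.det_fformII hu, ← smul_eq_mul (sumPrincipalRadii x (gaussMap x) u), ← dotProduct_smul,
      ← h.pd_cross_pd_normal_sub hu (h.sphericalJacobian_gaussMap_ne_zero hu hpar),
      dotProduct_sub, cross_dot_cross, cross_dot_cross]
    simp only [h.fformII_eq hu, fformI_apply, dotProduct_comm (pd 1 x u) (pd 0 x u)]
    ring
  rw [meanCurv_eq, htrace, gaussCurv]
  field_simp

lemma dotProduct_pd_eq_zero_of_norm3_eq {r : ℝ} (hx : DifferentiableAt ℝ x u)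
    (hr : ∀ᶠ v in 𝓝 u, norm3 (x v) = r) (i : Fin 2) : x u ⬝ᵥ pd i x u = 0 := by
  have hconst : ∀ᶠ v in 𝓝 u, x v ⬝ᵥ x v = r ^ 2 := hr.mono fun v hv => by rw [← norm3_sq, hv]
  have hpds := pds_eq_zero_of_eventually_const hconst i
  rw [pds_dotProduct hx hx, dotProduct_comm (pd i x u)] at hpds
  linarith

lemma Immersed.eq_smul_gaussMap_of_dotProduct_pd_eq_zero (himm : Immersed x U) (hu : u ∈ U)
    (hx : ∀ i, x u ⬝ᵥ pd i x u = 0) : x u = (x u ⬝ᵥ gaussMap x u) • gaussMap x u := by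
  refine eq_dotProduct_smul_of_cross_eq_zero (himm.gaussMap_dotProduct_self hu) ?_
  rw [gaussMap, map_smul, cross_cross_eq_smul_sub_smul', dotProduct_comm (pd 0 x u), hx, hx]
  simp

lemma Immersed.exists_ne_zero (himm : Immersed x U) (hU : IsOpen U) (hne : U.Nonempty) :
    ∃ u ∈ U, x u ≠ 0 := by
  by_contra! hzero
  obtain ⟨u, hu⟩ := hne
  have hpd : pd 0 x u = 0 := by
    rw [pd_congr (eventually_of_mem (hU.mem_nhds hu) hzero)]
    simp [pd]
  exact (himm u hu).ne_zero 0 hpd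

lemma IsUnitNormal.exists_norm3_eq_of_beltrami2_eq_smul {n : Param → Vec3}
    (h : IsUnitNormal x n U) (hconn : IsConnected U) (himm : Immersed x U)
    (hD : ∀ v ∈ U, sphericalJacobian n v ≠ 0) {c : ℝ} (hc0 : c ≠ 0)
    (hc : ∀ v ∈ U, beltrami2 (fformI n) x v = c • x v) :
    ∃ r, 0 < r ∧ ∀ u ∈ U, norm3 (x u) = r := by
  obtain ⟨Φ, hΦ⟩ := h.exists_sumPrincipalRadii_eq_const hconn.isPreconnected hD hc
  have hx : ∀ u ∈ U, x u = (c⁻¹ * -Φ) • n u := fun u hu => by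
    rw [mul_smul, ← hΦ u hu, ← h.smul_eq_of_beltrami2_eq_smul hD hc hu, inv_smul_smul₀ hc0]
  have hnorm : ∀ u ∈ U, norm3 (x u) = |c⁻¹ * -Φ| := fun u hu => by
    rw [hx u hu, norm3_smul_of_dotProduct_self_eq_one (h.dotProduct_self u hu)]
  obtain ⟨u₀, hu₀, hxu₀⟩ := himm.exists_ne_zero h.isOpen hconn.nonempty
  refine ⟨_, abs_pos.2 fun hzero => hxu₀ ?_, hnorm⟩
  rw [hx u₀ hu₀, hzero, zero_smul]

end GaussMap

theorem stmt14_general (U : Set Param) (x : Param → Vec3)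
    (hU : IsOpen U) (hUconn : IsConnected U)
    (hx : ContDiffOn ℝ 3 x U) (himm : Immersed x U)
    (hpar : ∀ u ∈ U, (fformII x u).det ≠ 0) :
    ((∃ lam : ℝ, lam ≠ 0 ∧ ∀ u ∈ U, beltrami2 (fformIII x) x u = lam • x u) ↔
      (∃ r : ℝ, 0 < r ∧ ∀ u ∈ U, norm3 (x u) = r)) ∧
    (∀ lam : ℝ, (∀ u ∈ U, beltrami2 (fformIII x) x u = lam • x u) →
      (∃ μ : ℝ, ∀ u ∈ U, meanCurv x u / gaussCurv x u = μ) ∧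
      (∀ u ∈ U, lam • x u =
        (-(2 * (meanCurv x u / gaussCurv x u))) • gaussMap x u)) := by
  have h := himm.isUnitNormal_gaussMap hU hx
  have hD : ∀ u ∈ U, sphericalJacobian (gaussMap x) u ≠ 0 := fun u hu =>
    h.sphericalJacobian_gaussMap_ne_zero hu (hpar u hu)
  have hHK : ∀ u ∈ U, 2 * (meanCurv x u / gaussCurv x u) = sumPrincipalRadii x (gaussMap x) u :=
    fun u hu => h.two_mul_meanCurv_div_gaussCurv hu himm (hpar u hu)
  rw [fformIII_eq_fformI_gaussMap]
  refine ⟨⟨?_, ?_⟩, fun lam hlam => ⟨?_, fun u hu => ?_⟩⟩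
  · rintro ⟨lam, hlam0, hlam⟩
    exact h.exists_norm3_eq_of_beltrami2_eq_smul hUconn himm hD hlam0 hlam
  · rintro ⟨r, -, hr⟩
    have hnormal : ∀ u ∈ U, x u = (x u ⬝ᵥ gaussMap x u) • gaussMap x u := fun u hu =>
      himm.eq_smul_gaussMap_of_dotProduct_pd_eq_zero hu <| dotProduct_pd_eq_zero_of_norm3_eq
        (h.differentiableAt hu) (eventually_of_mem (hU.mem_nhds hu) hr)
    exact ⟨2, two_ne_zero, fun u => h.beltrami2_eq_two_smul_of_eq_smul_normal hD hnormal⟩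
  · obtain ⟨Φ, hΦ⟩ := h.exists_sumPrincipalRadii_eq_const hUconn.isPreconnected hD hlam
    exact ⟨Φ / 2, fun u hu => by rw [← hΦ u hu, ← hHK u hu, mul_div_cancel_left₀ _ two_ne_zero]⟩
  · rw [hHK u hu, h.smul_eq_of_beltrami2_eq_smul hD hlam hu]

/-- Theorem 3.3: `Δ^{III} x = λ x` on `U` for some `λ ≠ 0` iff `M` is part
of a sphere centered at the origin; moreover in that case `H/K` is constant on `U` and
`λ x = −2(H/K) n`. -/
theorem stmt14 (U : Set Param) (x : Param → Vec3)
    (hU : IsOpen U) (hUconn : IsConnected U)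
    (hx : ContDiffOn ℝ (⊤ : ℕ∞) x U) (himm : Immersed x U)
    (hpar : ∀ u ∈ U, (fformII x u).det ≠ 0) :
    ((∃ lam : ℝ, lam ≠ 0 ∧ ∀ u ∈ U, beltrami2 (fformIII x) x u = lam • x u) ↔
      (∃ r : ℝ, 0 < r ∧ ∀ u ∈ U, norm3 (x u) = r)) ∧
    (∀ lam : ℝ, lam ≠ 0 → (∀ u ∈ U, beltrami2 (fformIII x) x u = lam • x u) →
      (∃ μ : ℝ, ∀ u ∈ U, meanCurv x u / gaussCurv x u = μ) ∧
      (∀ u ∈ U, lam • x u =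
        (-(2 * (meanCurv x u / gaussCurv x u))) • gaussMap x u)) := by
  have hx₃ : ContDiffOn ℝ 3 x U := hx.of_le (WithTop.coe_le_coe.2 le_top)
  obtain ⟨hiff, hmoreover⟩ := stmt14_general U x hU hUconn hx₃ himm hpar
  exact ⟨hiff, fun lam _ => hmoreover lam⟩
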